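/- arXiv:2312.01704 — 2 statements merged into one kernel-verified Lean document; each statement's English description precedes it below -/
import Mathlib

section
/- For every i ∈ I and all x', z' ∈ D, if d[l^{(i)}](x', z') < r''(σᵢ(x')), then d[l^{(i)}](x', z') = dᵢ(σᵢ(x'), σᵢ(z')). -/
noncomputable section

open Set
open scoped ENNReal

/-- The Euclidean plane `ℝ²` with the Euclidean metric. -/
abbrev E2 : Type := EuclideanSpace ℝ (Fin 2)

/-- Vertices of the fixed closed regular (equilateral) triangle of side length 1. -/
def p0 : E2 := !₂[0, 0]
def p1 : E2 := !₂[1, 0]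
def p2 : E2 := !₂[1 / 2, Real.sqrt 3 / 2]

/-- `Dtri` is the fixed closed regular triangle in `ℝ²` with edge length 1. -/
def Dtri : Set E2 := convexHull ℝ {p0, p1, p2}

/-- `V0` is the set of the three vertices of `Dtri`. -/
def V0 : Set E2 := {p0, p1, p2}

/-- The three closed edges of `Dtri`. -/
def e01 : Set E2 := segment ℝ p0 p1
def e12 : Set E2 := segment ℝ p1 p2
def e02 : Set E2 := segment ℝ p0 p2

/-- `E0` is the set of the three closed edges of `Dtri`. -/
def E0 : Set (Set E2) := {e01, e12, e02}

/-- The open edge `e° = e ∖ V₀`. -/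
def eo (e : Set E2) : Set E2 := e \ V0

/-- `Do = D°` is the interior of `Dtri` in `ℝ²`. -/
def Do : Set E2 := interior Dtri

/-- `l : E₀ → ℝ` is positive and satisfies the strict triangle inequalities:
`l e₁ + l e₂ > l e₃` whenever `{e₁, e₂, e₃} = E₀`. -/
def TriIneq (l : Set E2 → ℝ) : Prop :=
  (∀ e ∈ E0, 0 < l e) ∧
  ∀ e₁ e₂ e₃ : Set E2, ({e₁, e₂, e₃} : Set (Set E2)) = E0 → l e₁ + l e₂ > l e₃

/-- A linear map `f : ℝ² → ℝ²` realizes the edge lengths `l`, i.e. for each `e ∈ E₀`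
the segment `f(e)` has Euclidean length `l e`. -/
def Realizes (f : E2 →ₗ[ℝ] E2) (l : Set E2 → ℝ) : Prop :=
  dist (f p0) (f p1) = l e01 ∧ dist (f p1) (f p2) = l e12 ∧ dist (f p0) (f p2) = l e02

/-- The metric `d[l]` on `Dtri`, defined by `d[l](x,y) = |f x - f y|₂` for a linear map `f`
realizing the edge lengths `l` (this is independent of the choice of `f`). -/
def dD (l : Set E2 → ℝ) (x y : E2) : ℝ :=
  letI := Classical.propDecidable (∃ f : E2 →ₗ[ℝ] E2, Realizes f l)
  if h : ∃ f : E2 →ₗ[ℝ] E2, Realizes f l then dist (h.choose x) (h.choose y) else 0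

/-- A triangulation `T = (σᵢ)_{i ∈ I}`, `I = Fin n`, of a topological space `S`:
a finite family of continuous maps `σᵢ : Dtri → S` such that
(a) `σᵢ` is injective on each open edge, (b) `σᵢ` is injective on `D°`,
(c) `S` is the disjoint union of `⋃ᵢ σᵢ(V₀)`, the sets `σᵢ(D°)`, and the distinct sets
among the `σᵢ(e°)`, and (d) glued edges are identified by a linear homeomorphism. -/
structure Triangulation (S : Type) [TopologicalSpace S] (n : ℕ) where
  σ : Fin n → E2 → S
  continuousOn : ∀ i, ContinuousOn (σ i) Dtri
  inj_edge : ∀ i, ∀ e ∈ E0, InjOn (σ i) (eo e)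
  inj_int : ∀ i, InjOn (σ i) Do
  cover : (⋃ i, σ i '' V0) ∪ (⋃ i, σ i '' Do) ∪ (⋃ i, ⋃ e ∈ E0, σ i '' eo e) = univ
  disj_int : ∀ i j, i ≠ j → Disjoint (σ i '' Do) (σ j '' Do)
  disj_vert_int : ∀ j, Disjoint (⋃ i, σ i '' V0) (σ j '' Do)
  disj_vert_edge : ∀ j, ∀ e ∈ E0, Disjoint (⋃ i, σ i '' V0) (σ j '' eo e)
  disj_int_edge : ∀ i j, ∀ e ∈ E0, Disjoint (σ i '' Do) (σ j '' eo e)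
  edge_eq_or_disjoint : ∀ i j, ∀ e ∈ E0, ∀ e' ∈ E0,
    σ i '' eo e = σ j '' eo e' ∨ Disjoint (σ i '' eo e) (σ j '' eo e')
  glue : ∀ i j, ∀ e ∈ E0, ∀ e' ∈ E0, σ i '' eo e = σ j '' eo e' →
    ∃ A : E2 →ᵃ[ℝ] E2, A '' e = e' ∧ ∀ x ∈ e, σ j (A x) = σ i x

variable {S : Type} [TopologicalSpace S] {n : ℕ}

/-- `l ∈ ℝ^{E(T)}_Δ`: `l` assigns positive lengths to the edges of `T` satisfying the
strict triangle inequalities in each triangle. -/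
def TriIneqT (T : Triangulation S n) (l : Set S → ℝ) : Prop :=
  (∀ (i : Fin n), ∀ e ∈ E0, 0 < l (T.σ i '' e)) ∧
  ∀ (i : Fin n), ∀ e₁ e₂ e₃ : Set E2, ({e₁, e₂, e₃} : Set (Set E2)) = E0 →
    l (T.σ i '' e₁) + l (T.σ i '' e₂) > l (T.σ i '' e₃)

/-- The restricted edge lengths `l^{(i)}` on the triangle `σᵢ(D)`: `l^{(i)}_e = l_{σᵢ(e)}`. -/
def lRes (T : Triangulation S n) (l : Set S → ℝ) (i : Fin n) : Set E2 → ℝ :=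
  fun e => l (T.σ i '' e)

/-- `dᵢ(x,y) = min { d[l^{(i)}](x',y') : x' ∈ σᵢ⁻¹(x), y' ∈ σᵢ⁻¹(y) }` for `x, y ∈ σᵢ(D)`. -/
def dTri (T : Triangulation S n) (l : Set S → ℝ) (i : Fin n) (x y : S) : ℝ :=
  sInf { r | ∃ x' ∈ Dtri, ∃ y' ∈ Dtri,
    T.σ i x' = x ∧ T.σ i y' = y ∧ r = dD (lRes T l i) x' y' }

/-- The set of sums `Σ_j d_{i_j}(x_{j-1}, x_j)` over chains from `x` to `y`. -/
def chainSums (T : Triangulation S n) (l : Set S → ℝ) (x y : S) : Set ℝ :=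
  { r | ∃ (k : ℕ) (c : ℕ → S) (idx : ℕ → Fin n),
      c 0 = x ∧ c k = y ∧
      (∀ j < k, c j ∈ T.σ (idx j) '' Dtri ∧ c (j + 1) ∈ T.σ (idx j) '' Dtri) ∧
      r = ∑ j ∈ Finset.range k, dTri T l (idx j) (c j) (c (j + 1)) }

/-- The glued metric `d[l]` on `S`. -/
def dGlue (T : Triangulation S n) (l : Set S → ℝ) (x y : S) : ℝ :=
  sInf (chainSums T l x y)

/-- `K(x)`: the union of the edges of `Dtri` not containing `x`. -/
def Kset (x : E2) : Set E2 := ⋃₀ {e ∈ E0 | x ∉ e}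

/-- The distance from `x` to `K(x)` in `(Dtri, d[l'])`. -/
def rObs (l' : Set E2 → ℝ) (x : E2) : ℝ := sInf { r | ∃ y ∈ Kset x, r = dD l' x y }

/-- `r(x) = min { rᵢ(x') : i ∈ I, x' ∈ σᵢ⁻¹(x) }` for `x ∈ S`. -/
def rS (T : Triangulation S n) (l : Set S → ℝ) (x : S) : ℝ :=
  sInf { r | ∃ i : Fin n, ∃ x' ∈ Dtri, T.σ i x' = x ∧ r = rObs (lRes T l i) x' }

/-- The set of half-distances `½ d[l^{(i)}](x', x'')` between distinct preimages of `x`. -/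
def rPair (T : Triangulation S n) (l : Set S → ℝ) (x : S) : Set ℝ :=
  { r | ∃ i : Fin n, ∃ x' ∈ Dtri, ∃ x'' ∈ Dtri,
      T.σ i x' = x ∧ T.σ i x'' = x ∧ x' ≠ x'' ∧ r = dD (lRes T l i) x' x'' / 2 }

/-- `r''(x) = min { r(x), r'(x) }`, where `r'(x)` is the infimum of the half-distances
between distinct preimages of `x` (interpreted as `+∞`, i.e. dropped, if there is none). -/
def rPP (T : Triangulation S n) (l : Set S → ℝ) (x : S) : ℝ :=
  sInf ({rS T l x} ∪ rPair T l x)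

lemma dD_cases (l : Set E2 → ℝ) :
    (∀ x y, dD l x y = 0) ∨
      ∃ f : E2 →ₗ[ℝ] E2, Realizes f l ∧ ∀ x y, dD l x y = dist (f x) (f y) := by
  by_cases h : ∃ f : E2 →ₗ[ℝ] E2, Realizes f l
  · right
    refine ⟨h.choose, h.choose_spec, fun x y => ?_⟩
    simp only [dD, dif_pos h]
  · left
    intro x y
    simp only [dD, dif_neg h]

lemma dD_nonneg (l : Set E2 → ℝ) (x y : E2) : 0 ≤ dD l x y := by
  rcases dD_cases l with h | ⟨f, -, h⟩ <;> rw [h]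
  exact dist_nonneg

lemma mem_seg {p q x : E2} (h : x ∈ segment ℝ p q) :
    ∃ t : ℝ, 0 ≤ t ∧ t ≤ 1 ∧ ∀ k, x k = (1 - t) * p k + t * q k := by
  obtain ⟨a, b, ha, hb, hab, rfl⟩ := h
  refine ⟨b, hb, by linarith, fun k => ?_⟩
  simp [← hab]

lemma seg_sub_Dtri {p q : E2} (hp : p ∈ V0) (hq : q ∈ V0) : segment ℝ p q ⊆ Dtri :=
  (convex_convexHull ℝ _).segment_subset (subset_convexHull ℝ _ hp) (subset_convexHull ℝ _ hq)

lemma edge_eq {e : Set E2} (he : e ∈ E0) : ∃ p ∈ V0, ∃ q ∈ V0, e = segment ℝ p q ∧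
    ∀ (f : E2 →ₗ[ℝ] E2) l, Realizes f l → dist (f p) (f q) = l e := by
  simp only [E0, mem_insert_iff, mem_singleton_iff] at he
  rcases he with rfl | rfl | rfl
  · exact ⟨p0, by simp [V0], p1, by simp [V0], rfl, fun f l h => h.1⟩
  · exact ⟨p1, by simp [V0], p2, by simp [V0], rfl, fun f l h => h.2.1⟩
  · exact ⟨p0, by simp [V0], p2, by simp [V0], rfl, fun f l h => h.2.2⟩

lemma edge_sub {e : Set E2} (he : e ∈ E0) : e ⊆ Dtri := by
  obtain ⟨p, hp, q, hq, rfl, -⟩ := edge_eq he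
  exact seg_sub_Dtri hp hq

lemma Dtri_bary {x : E2} (hx : x ∈ Dtri) : ∃ a b c : ℝ, 0 ≤ a ∧ 0 ≤ b ∧ 0 ≤ c ∧ a + b + c = 1 ∧
    a • p0 + b • p1 + c • p2 = x := by
  rw [Dtri, convexHull_insert (by simp), convexHull_pair] at hx
  simp only [mem_convexJoin, mem_singleton_iff, exists_eq_left] at hx
  obtain ⟨y, ⟨a, b, ha, hb, hab, rfl⟩, ⟨c, d, hc, hd, hcd, rfl⟩⟩ := hx
  refine ⟨c, d * a, d * b, hc, by positivity, by positivity, ?_, ?_⟩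
  · rw [add_assoc, ← mul_add, hab, mul_one, hcd]
  · simp only [smul_add, smul_smul, add_assoc]

lemma bary_int {a b c : ℝ} (ha : 0 < a) (hb : 0 < b) (hc : 0 < c) (h : a + b + c = 1) :
    a • p0 + b • p1 + c • p2 ∈ Do := by
  have h3 : 0 < Real.sqrt 3 := by positivity
  let s := Real.sqrt 3
  let U : Set E2 := {y | 0 < y 1 ∧ y 1 < s * y 0 ∧ y 1 < s * (1 - y 0)}
  have hU : IsOpen U := by
    have c0 : Continuous fun y : E2 => y 0 := by fun_prop
    have c1 : Continuous fun y : E2 => y 1 := by fun_prop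
    exact (isOpen_lt continuous_const c1).inter ((isOpen_lt c1 (continuous_const.mul c0)).inter
      (isOpen_lt c1 (continuous_const.mul (continuous_const.sub c0))))
  have hsub : U ⊆ Dtri := by
    rintro y ⟨h1, h2, h3'⟩
    set t := y 1 / s with ht
    have hy1 : y 1 = s * t := by rw [ht, mul_div_cancel₀ _ h3.ne']
    have ht0 : 0 < t := by positivity
    rw [hy1] at h2 h3'
    have h2' := lt_of_mul_lt_mul_left h2 h3.le
    have h3'' := lt_of_mul_lt_mul_left h3' h3.le
    have hy : y = (1 - y 0 - t) • p0 + ((y 0 - t) • p1 + (2 * t) • p2) := by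
      ext k
      fin_cases k
      · simp [p0, p1, p2]; ring
      · simp [p0, p1, p2]; rw [hy1]; ring
    rw [hy]
    have := (convex_convexHull ℝ ({p0, p1, p2} : Set E2)).sum_mem
      (t := Finset.univ) (w := ![1 - y 0 - t, y 0 - t, 2 * t]) (z := ![p0, p1, p2])
      (by intro i _; fin_cases i <;> simp <;> linarith)
      (by simp [Fin.sum_univ_three]; ring)
      (by intro i _; apply subset_convexHull; fin_cases i <;> simp)
    simpa [Fin.sum_univ_three, Dtri, add_assoc] using this
  refine interior_maximal hsub hU ?_
  have : 0 < s * c := by positivity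
  have : 0 < s * b := by positivity
  have : 0 < s * a := by positivity
  have hs : s * (a + b + c) = s := by rw [h, mul_one]
  refine ⟨?_, ?_, ?_⟩ <;> simp [p0, p1, p2] <;> change _ < _ <;> nlinarith

lemma seg_of_bary {p q : E2} {b c : ℝ} (hb : 0 ≤ b) (hc : 0 ≤ c) (h : b + c = 1) :
    b • p + c • q ∈ segment ℝ p q := ⟨b, c, hb, hc, h, rfl⟩

lemma Dtri_cases {x : E2} (hx : x ∈ Dtri) : x ∈ V0 ∨ x ∈ Do ∨ ∃ e ∈ E0, x ∈ eo e := by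
  by_cases hV : x ∈ V0
  · exact Or.inl hV
  right
  obtain ⟨a, b, c, ha, hb, hc, h, rfl⟩ := Dtri_bary hx
  rcases ha.eq_or_lt with rfl | ha
  · exact Or.inr ⟨e12, by simp [E0], by
      rw [e12]; simpa using seg_of_bary hb hc (by linarith), hV⟩
  rcases hb.eq_or_lt with rfl | hb
  · exact Or.inr ⟨e02, by simp [E0], by
      rw [e02]; simpa using seg_of_bary ha.le hc (by linarith), hV⟩
  rcases hc.eq_or_lt with rfl | hc
  · exact Or.inr ⟨e01, by simp [E0], by
      rw [e01]; simpa using seg_of_bary ha.le hb.le (by linarith), hV⟩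
  exact Or.inl (bary_int ha hb hc h)

lemma vertex_eq {x z : E2} (hz : z ∈ V0) (h : ∀ e ∈ E0, z ∈ e → x ∈ e) : x = z := by
  have h3 : Real.sqrt 3 ≠ 0 := by positivity
  simp only [V0, mem_insert_iff, mem_singleton_iff] at hz
  rcases hz with rfl | rfl | rfl
  · obtain ⟨s, -, -, hs⟩ := mem_seg (h e01 (by simp [E0]) (left_mem_segment ℝ _ _))
    obtain ⟨t, -, -, ht⟩ := mem_seg (h e02 (by simp [E0]) (left_mem_segment ℝ _ _))
    have hs1 := hs 1
    have ht1 := ht 1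
    have ht0 := ht 0
    simp [p0, p1, p2] at hs1 ht1 ht0
    rw [hs1] at ht1
    have : t = 0 := by simpa [h3] using ht1
    subst this
    ext k; fin_cases k <;> simp [p0, hs1, ht0]
  · obtain ⟨s, -, -, hs⟩ := mem_seg (h e01 (by simp [E0]) (right_mem_segment ℝ _ _))
    obtain ⟨t, -, -, ht⟩ := mem_seg (h e12 (by simp [E0]) (left_mem_segment ℝ _ _))
    have hs1 := hs 1
    have ht1 := ht 1
    have ht0 := ht 0
    simp [p0, p1, p2] at hs1 ht1 ht0
    rw [hs1] at ht1
    have : t = 0 := by simpa [h3] using ht1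
    subst this
    ext k; fin_cases k <;> simp [p1, hs1, ht0]
  · obtain ⟨s, -, -, hs⟩ := mem_seg (h e02 (by simp [E0]) (right_mem_segment ℝ _ _))
    obtain ⟨t, -, -, ht⟩ := mem_seg (h e12 (by simp [E0]) (right_mem_segment ℝ _ _))
    have hs1 := hs 1
    have hs0 := hs 0
    have ht1 := ht 1
    have ht0 := ht 0
    simp [p0, p1, p2] at hs1 hs0 ht1 ht0
    rw [hs1] at ht1
    have hst : s = t := by simpa [h3] using ht1
    subst hst
    have : s = 1 := by linarith
    subst this
    ext k; fin_cases k <;> simp [p2, hs1, hs0]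

lemma glue_dist {f : E2 →ₗ[ℝ] E2} {l : Set E2 → ℝ} (hf : Realizes f l) {e e1 : Set E2}
    (he : e ∈ E0) (he1 : e1 ∈ E0) (A : E2 →ᵃ[ℝ] E2) (hA : A '' e = e1) (hl : l e = l e1)
    {x z : E2} (hx : x ∈ e) (hz : z ∈ e) : dist (f (A x)) (f (A z)) = dist (f x) (f z) := by
  obtain ⟨p, -, q, -, rfl, hd⟩ := edge_eq he
  obtain ⟨p', -, q', -, rfl, hd'⟩ := edge_eq he1
  have diam_seg : ∀ a b : E2, Metric.diam (segment ℝ a b) = dist a b := fun a b => by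
    rw [← convexHull_pair, convexHull_diam, Metric.diam_pair]
  have key : dist (f (A p)) (f (A q)) = dist (f p) (f q) := by
    rw [hd f l hf, hl, ← hd' f l hf, ← diam_seg, ← diam_seg]
    have e1 : f '' segment ℝ p' q' = segment ℝ (f p') (f q') :=
      image_segment ℝ f.toAffineMap p' q'
    have e2 : f '' segment ℝ (A p) (A q) = segment ℝ (f (A p)) (f (A q)) :=
      image_segment ℝ f.toAffineMap _ _
    rw [← e1, ← e2, ← image_segment ℝ A, hA]
  rw [segment_eq_image_lineMap] at hx hz
  obtain ⟨s, -, rfl⟩ := hx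
  obtain ⟨t, -, rfl⟩ := hz
  have hff : ∀ (a b : E2) (r : ℝ), f (AffineMap.lineMap a b r) = AffineMap.lineMap (f a) (f b) r :=
    fun a b r => f.toAffineMap.apply_lineMap a b r
  rw [A.apply_lineMap, A.apply_lineMap, hff, hff, hff, hff, dist_lineMap_lineMap,
    dist_lineMap_lineMap, key]

lemma rPP_le_dD {S : Type} [TopologicalSpace S] {n : ℕ} (T : Triangulation S n) (l : Set S → ℝ)
    (i : Fin n) {x y : E2} (hx : x ∈ Dtri) (hy : y ∈ Kset x) :
    rPP T l (T.σ i x) ≤ dD (lRes T l i) x y := by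
  have hO : ∀ (l' : Set E2 → ℝ) x, 0 ≤ rObs l' x := fun l' x => by
    apply Real.sInf_nonneg
    rintro _ ⟨y, -, rfl⟩
    exact dD_nonneg _ _ _
  have h1 : rPP T l (T.σ i x) ≤ rS T l (T.σ i x) := by
    refine csInf_le ⟨min (rS T l (T.σ i x)) 0, ?_⟩ (Or.inl rfl)
    rintro r (rfl | ⟨j, a, -, b, -, -, -, -, rfl⟩)
    · exact min_le_left _ _
    · exact (min_le_right _ _).trans (by have := dD_nonneg (lRes T l j) a b; positivity)
  have h2 : rS T l (T.σ i x) ≤ rObs (lRes T l i) x := by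
    refine csInf_le ⟨0, ?_⟩ ⟨i, x, hx, rfl, rfl⟩
    rintro r ⟨j, a, -, -, rfl⟩
    exact hO _ _
  have h3 : rObs (lRes T l i) x ≤ dD (lRes T l i) x y := by
    refine csInf_le ⟨0, ?_⟩ ⟨y, hy, rfl⟩
    rintro r ⟨j, -, rfl⟩
    exact dD_nonneg _ _ _
  linarith

lemma rPP_le_pair {S : Type} [TopologicalSpace S] {n : ℕ} (T : Triangulation S n) (l : Set S → ℝ)
    (i : Fin n) {x y : E2} {w : S} (hx : x ∈ Dtri) (hy : y ∈ Dtri) (hxw : T.σ i x = w)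
    (hyw : T.σ i y = w) (hne : x ≠ y) :
    rPP T l w ≤ dD (lRes T l i) x y / 2 := by
  refine csInf_le ⟨min (rS T l w) 0, ?_⟩ (Or.inr ⟨i, x, hx, y, hy, hxw, hyw, hne, rfl⟩)
  rintro r (rfl | ⟨j, a, -, b, -, -, -, -, rfl⟩)
  · exact min_le_left _ _
  · exact (min_le_right _ _).trans (by have := dD_nonneg (lRes T l j) a b; positivity)

/-- for every `i ∈ I` and `x', z' ∈ Dtri`, if
`d[l^{(i)}](x', z') < r''(σᵢ x')`, then `d[l^{(i)}](x', z') = dᵢ(σᵢ x', σᵢ z')`. -/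
theorem dD_eq_dTri_of_lt_rPP
    {S : Type} [TopologicalSpace S] [CompactSpace S] [T2Space S] [ConnectedSpace S]
    {n : ℕ} (T : Triangulation S n) (l : Set S → ℝ) (hl : TriIneqT T l)
    (i : Fin n) (x' z' : E2) (hx' : x' ∈ Dtri) (hz' : z' ∈ Dtri)
    (hlt : dD (lRes T l i) x' z' < rPP T l (T.σ i x')) :
    dD (lRes T l i) x' z' = dTri T l i (T.σ i x') (T.σ i z') := by
  have hlow : ∀ x1 ∈ Dtri, ∀ z1 ∈ Dtri, T.σ i x1 = T.σ i x' → T.σ i z1 = T.σ i z' →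
      dD (lRes T l i) x' z' ≤ dD (lRes T l i) x1 z1 := by
    intro x1 hx1 z1 hz1 hxx hzz
    have hnn := dD_nonneg (lRes T l i) x1 z1
    rcases dD_cases (lRes T l i) with h0 | ⟨f, hf, hd⟩
    · rw [h0, h0]
    have hK : ∀ e ∈ E0, z' ∈ e → x' ∈ e := by
      intro e he hze
      by_contra hxe
      exact absurd (rPP_le_dD T l i hx' ⟨e, ⟨he, hxe⟩, hze⟩) (not_le.2 hlt)
    have key : ∀ x2 ∈ Dtri, T.σ i x2 = T.σ i x' →
        dD (lRes T l i) x2 z1 = dD (lRes T l i) x' z' →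
        dD (lRes T l i) x' z' ≤ dD (lRes T l i) x1 z1 := by
      intro x2 hx2 hs hd2
      by_cases hne : x1 = x2
      · rw [hne, hd2]
      have hp := rPP_le_pair T l i hx1 hx2 hxx hs hne
      rw [hd] at hp hd2 ⊢
      rw [hd] at hlt hd2 ⊢
      have := dist_triangle_right (f x1) (f x2) (f z1)
      linarith
    rcases Dtri_cases hz' with hv | hi | ⟨e, he, hze⟩
    · rw [vertex_eq hv hK, hd z' z', dist_self]
      exact hnn
    · have : z1 = z' := by
        rcases Dtri_cases hz1 with hv1 | hi1 | ⟨e1, he1, hze1⟩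
        · exact absurd ⟨z', hi, hzz.symm⟩ (Set.disjoint_left.1 (T.disj_vert_int i)
            (mem_iUnion.2 ⟨i, z1, hv1, rfl⟩))
        · exact T.inj_int i hi1 hi hzz
        · exact absurd ⟨z1, hze1, hzz⟩ (Set.disjoint_left.1 (T.disj_int_edge i i e1 he1)
            ⟨z', hi, rfl⟩)
      subst this
      exact key x' hx' rfl rfl
    · rcases Dtri_cases hz1 with hv1 | hi1 | ⟨e1, he1, hze1⟩
      · exact absurd ⟨z', hze, hzz.symm⟩ (Set.disjoint_left.1 (T.disj_vert_edge i e he)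
            (mem_iUnion.2 ⟨i, z1, hv1, rfl⟩))
      · exact absurd ⟨z', hze, hzz.symm⟩ (Set.disjoint_left.1 (T.disj_int_edge i i e he)
            ⟨z1, hi1, rfl⟩)
      have heq : T.σ i '' eo e = T.σ i '' eo e1 := by
        rcases T.edge_eq_or_disjoint i i e he e1 he1 with h | h
        · exact h
        · exact absurd ⟨z1, hze1, hzz⟩ (Set.disjoint_left.1 h ⟨z', hze, rfl⟩)
      obtain ⟨A, hA, hAσ⟩ := T.glue i i e he e1 he1 heq
      have hxe := hK e he hze.1
      have hAz : A z' ∈ e1 := hA ▸ mem_image_of_mem A hze.1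
      have hAx : A x' ∈ e1 := hA ▸ mem_image_of_mem A hxe
      have hAzo : A z' ∈ eo e1 := by
        refine ⟨hAz, fun hv => ?_⟩
        exact absurd ⟨z', hze, (hAσ z' hze.1).symm⟩
          (Set.disjoint_left.1 (T.disj_vert_edge i e he) (mem_iUnion.2 ⟨i, A z', hv, rfl⟩))
      have hz1A : A z' = z1 :=
        T.inj_edge i e1 he1 hAzo hze1 ((hAσ z' hze.1).trans hzz.symm)
      have hll : lRes T l i e = lRes T l i e1 := by
        have : T.σ i '' e = T.σ i '' e1 := by
          rw [← hA, image_image]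
          exact image_congr fun x hx => (hAσ x hx).symm
        simp only [lRes, this]
      refine key (A x') (edge_sub he1 hAx) (hAσ x' hxe) ?_
      rw [hd, hd, ← hz1A]
      exact glue_dist hf he he1 A hA hll hxe hze.1
  refine le_antisymm ?_ ?_
  · refine le_csInf ⟨_, x', hx', z', hz', rfl, rfl, rfl⟩ ?_
    rintro r ⟨x1, hx1, z1, hz1, h1, h2, rfl⟩
    exact hlow x1 hx1 z1 hz1 h1 h2
  · refine csInf_le ⟨0, ?_⟩ ⟨x', hx', z', hz', rfl, rfl, rfl⟩
    rintro r ⟨x1, hx1, z1, hz1, h1, h2, rfl⟩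
    exact dD_nonneg _ _ _
end
end

section
/- For every i ∈ I and every continuous map γ : [0,1] → D, the length of γ in (D, d[l^{(i)}]) equals the length of σᵢ ∘ γ in (S, d[l]); that is, L(γ, d[l^{(i)}]) = L(σᵢ ∘ γ, d[l]). -/
noncomputable section

open Set
open scoped ENNReal

variable {S : Type} [TopologicalSpace S] {n : ℕ}

/-- The length `L(γ, d)` of a curve `γ : [0,1] → X` with respect to a metric `d`:
`L(γ,d) = sup { Σ_j d(γ t_{j-1}, γ t_j) : 0 = t₀ < t₁ < ... < t_k = 1 }`, valued in `[0,∞]`. -/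
def pathLen {X : Type} (d : X → X → ℝ) (γ : ℝ → X) : ℝ≥0∞ :=
  ⨆ (k : ℕ) (t : Fin (k + 1) → ℝ) (_ : StrictMono t ∧ t 0 = 0 ∧ t (Fin.last k) = 1),
    ENNReal.ofReal (∑ j : Fin k, d (γ (t j.castSucc)) (γ (t j.succ)))

namespace GlueAux

def b1 (x : E2) : ℝ := x 0 - x 1 / Real.sqrt 3
def b2 (x : E2) : ℝ := 2 * x 1 / Real.sqrt 3

lemma sqrt3_pos : 0 < Real.sqrt 3 := by positivity

lemma repr_b (x : E2) : x = b1 x • p1 + b2 x • p2 := by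
  have := sqrt3_pos.ne'
  ext i
  fin_cases i
  · simp [b1, b2, p1, p2]; field_simp; ring
  · simp [b1, b2, p1, p2]; field_simp

lemma p0_eq : p0 = 0 := by
  ext i
  fin_cases i <;> simp [p0]

lemma p0_mem : p0 ∈ Dtri := subset_convexHull ℝ _ (by simp)
lemma p1_mem : p1 ∈ Dtri := subset_convexHull ℝ _ (by simp)
lemma p2_mem : p2 ∈ Dtri := subset_convexHull ℝ _ (by simp)

lemma mem_D_iff (x : E2) : x ∈ Dtri ↔ 0 ≤ b1 x ∧ 0 ≤ b2 x ∧ b1 x + b2 x ≤ 1 := by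
  constructor
  · have hs : Dtri ⊆ {x : E2 | 0 ≤ b1 x ∧ 0 ≤ b2 x ∧ b1 x + b2 x ≤ 1} := by
      apply convexHull_min
      · have := sqrt3_pos.ne'
        rintro y (rfl | rfl | rfl)
        · simp [b1, b2, p0]
        · simp [b1, b2, p1]
        · simp only [b1, b2, p2, mem_ofPred_eq]
          simp
          field_simp
          norm_num
      · intro y hy z hz a b ha hb hab
        have e1 : b1 (a • y + b • z) = a * b1 y + b * b1 z := by
          simp [b1]; ring
        have e2 : b2 (a • y + b • z) = a * b2 y + b * b2 z := by
          simp [b2]; ring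
        simp only [mem_ofPred_eq] at hy hz ⊢
        rw [e1, e2]
        obtain ⟨h1, h2, h3⟩ := hy
        obtain ⟨k1, k2, k3⟩ := hz
        refine ⟨by positivity, by positivity, ?_⟩
        nlinarith [mul_le_mul_of_nonneg_left h3 ha, mul_le_mul_of_nonneg_left k3 hb]
    exact fun h => hs h
  · rintro ⟨h1, h2, h3⟩
    have hc : Convex ℝ Dtri := convex_convexHull ℝ _
    have := hc.sum_mem (t := Finset.univ) (w := ![1 - b1 x - b2 x, b1 x, b2 x])
      (z := ![p0, p1, p2]) (by
        intro i _
        fin_cases i <;> simp <;> linarith) (by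
        simp [Fin.sum_univ_three]; ring) (by
        intro i _
        fin_cases i
        · exact p0_mem
        · exact p1_mem
        · exact p2_mem)
    rw [repr_b x]
    simpa [Fin.sum_univ_three, p0_eq] using this

lemma cont_b1 : Continuous b1 := by unfold b1; fun_prop
lemma cont_b2 : Continuous b2 := by unfold b2; fun_prop

lemma D_cases (x : E2) (hx : x ∈ Dtri) : x ∈ V0 ∨ x ∈ Do ∨ ∃ e ∈ E0, x ∈ eo e := by
  by_cases hv : x ∈ V0
  · exact Or.inl hv
  right
  obtain ⟨h1, h2, h3⟩ := (mem_D_iff x).1 hx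
  have hr := repr_b x
  by_cases q1 : b1 x = 0
  · right
    refine ⟨e02, by simp [E0], ?_, hv⟩
    refine ⟨1 - b2 x, b2 x, by linarith, h2, by ring, ?_⟩
    rw [p0_eq]
    conv_rhs => rw [hr]
    simp [q1]
  by_cases q2 : b2 x = 0
  · right
    refine ⟨e01, by simp [E0], ?_, hv⟩
    refine ⟨1 - b1 x, b1 x, by linarith, h1, by ring, ?_⟩
    rw [p0_eq]
    conv_rhs => rw [hr]
    simp [q2]
  by_cases q3 : b1 x + b2 x = 1
  · right
    refine ⟨e12, by simp [E0], ?_, hv⟩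
    exact ⟨b1 x, b2 x, h1, h2, q3, hr.symm⟩
  left
  rw [Do, mem_interior]
  refine ⟨{y | 0 < b1 y} ∩ {y | 0 < b2 y} ∩ {y | b1 y + b2 y < 1}, ?_, ?_, ?_⟩
  · rintro y ⟨⟨k1, k2⟩, k3⟩
    exact (mem_D_iff y).2 ⟨le_of_lt k1, le_of_lt k2, le_of_lt k3⟩
  · exact ((isOpen_lt continuous_const cont_b1).inter
      (isOpen_lt continuous_const cont_b2)).inter
      (isOpen_lt (cont_b1.add cont_b2) continuous_const)
  · exact ⟨⟨lt_of_le_of_ne h1 (Ne.symm q1), lt_of_le_of_ne h2 (Ne.symm q2)⟩,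
      lt_of_le_of_ne h3 q3⟩

lemma seg_E0 {e : Set E2} (he : e ∈ E0) : ∃ a b, e = segment ℝ a b ∧ e ⊆ Dtri ∧
    ∀ (f : E2 →ₗ[ℝ] E2) (l : Set E2 → ℝ), Realizes f l → dist (f a) (f b) = l e := by
  have hc : Convex ℝ Dtri := convex_convexHull ℝ _
  rcases he with rfl | rfl | rfl
  · exact ⟨p0, p1, rfl, hc.segment_subset p0_mem p1_mem, fun f l h => h.1⟩
  · exact ⟨p1, p2, rfl, hc.segment_subset p1_mem p2_mem, fun f l h => h.2.1⟩
  · exact ⟨p0, p2, rfl, hc.segment_subset p0_mem p2_mem, fun f l h => h.2.2⟩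

lemma E0_finite : E0.Finite := by simp [E0]
lemma V0_finite : V0.Finite := by simp [V0]

lemma exists_realizes (l : Set E2 → ℝ) (h0 : 0 < l e01) (h1 : 0 < l e12) (h2 : 0 < l e02)
    (t1 : l e01 + l e12 > l e02) (t2 : l e12 + l e02 > l e01) (t3 : l e01 + l e02 > l e12) :
    ∃ f : E2 →ₗ[ℝ] E2, Realizes f l := by
  unfold Realizes
  generalize l e01 = a at *
  generalize l e12 = c at *
  generalize l e02 = b at *
  obtain ⟨x, hx⟩ : ∃ x, x = (a ^ 2 + b ^ 2 - c ^ 2) / (2 * a) := ⟨_, rfl⟩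
  have hx' : 2 * a * x = a ^ 2 + b ^ 2 - c ^ 2 := by rw [hx]; field_simp
  have hn : 0 ≤ b ^ 2 - x ^ 2 := by
    have hu : x ≤ b := by
      by_contra hcon
      push Not at hcon
      nlinarith
    have hl : -b ≤ x := by
      by_contra hcon
      push Not at hcon
      nlinarith
    nlinarith
  obtain ⟨y, hy⟩ : ∃ y, y = Real.sqrt (b ^ 2 - x ^ 2) := ⟨_, rfl⟩
  have hy2 : y ^ 2 = b ^ 2 - x ^ 2 := by rw [hy]; exact Real.sq_sqrt hn
  let B1 : E2 →ₗ[ℝ] ℝ :=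
    { toFun := b1
      map_add' := by intro u v; simp [b1]; ring
      map_smul' := by intro u v; simp [b1]; ring }
  let B2 : E2 →ₗ[ℝ] ℝ :=
    { toFun := b2
      map_add' := by intro u v; simp [b2]; ring
      map_smul' := by intro u v; simp [b2]; ring }
  let f : E2 →ₗ[ℝ] E2 := B1.smulRight (!₂[a, 0] : E2) + B2.smulRight (!₂[x, y] : E2)
  have hs := sqrt3_pos.ne'
  have f0 : f p0 = 0 := by rw [p0_eq]; simp
  have f1 : f p1 = !₂[a, 0] := by
    have e1 : B1 p1 = 1 := by change b1 p1 = 1; simp [b1, p1]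
    have e2 : B2 p1 = 0 := by change b2 p1 = 0; simp [b2, p1]
    simp [f, e1, e2]
  have f2 : f p2 = !₂[x, y] := by
    have e1 : B1 p2 = 0 := by change b1 p2 = 0; simp [b1, p2]; field_simp; norm_num
    have e2 : B2 p2 = 1 := by change b2 p2 = 1; simp [b2, p2]; field_simp
    simp [f, e1, e2]
  refine ⟨f, ?_, ?_, ?_⟩
  · rw [f0, f1, EuclideanSpace.dist_eq]
    simp [Real.dist_eq, Real.sqrt_sq h0.le]
  · rw [f1, f2, EuclideanSpace.dist_eq]
    simp only [Fin.sum_univ_two, Real.dist_eq, sq_abs]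
    rw [Real.sqrt_eq_iff_mul_self_eq_of_pos h1]
    simp
    nlinarith
  · rw [f0, f2, EuclideanSpace.dist_eq]
    simp only [Fin.sum_univ_two, Real.dist_eq, sq_abs]
    rw [Real.sqrt_eq_iff_mul_self_eq_of_pos h2]
    simp
    nlinarith

lemma tri_aux {u v : E2} {s t : ℝ} (hs : s ≠ 0) (h : s • u + t • v = 0)
    (t1 : ‖u‖ + ‖u - v‖ > ‖v‖) (t2 : ‖u - v‖ + ‖v‖ > ‖u‖) (t3 : ‖u‖ + ‖v‖ > ‖u - v‖) :
    False := by
  have hu : u = (-t / s) • v := by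
    have : s • u = (-t) • v := by rw [neg_smul]; exact eq_neg_of_add_eq_zero_left h
    rw [div_eq_inv_mul, mul_smul, ← this, smul_smul, inv_mul_cancel₀ hs, one_smul]
  generalize -t / s = r at hu
  have h1 : ‖u‖ = |r| * ‖v‖ := by rw [hu, norm_smul, Real.norm_eq_abs]
  have h2 : ‖u - v‖ = |r - 1| * ‖v‖ := by
    rw [hu, ← Real.norm_eq_abs, ← norm_smul, sub_smul, one_smul]
  rw [h1, h2] at t1 t2 t3
  rcases abs_cases r with ⟨q, _⟩ | ⟨q, _⟩ <;> rcases abs_cases (r - 1) with ⟨q', _⟩ | ⟨q', _⟩ <;>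
    rw [q, q'] at t1 t2 t3 <;> nlinarith

lemma realizes_inj (l : Set E2 → ℝ) (f : E2 →ₗ[ℝ] E2) (hf : Realizes f l)
    (t1 : l e01 + l e12 > l e02) (t2 : l e12 + l e02 > l e01) (t3 : l e01 + l e02 > l e12) :
    Function.Injective f := by
  rw [injective_iff_map_eq_zero]
  intro x hx
  obtain ⟨h1, h2, h3⟩ := hf
  rw [p0_eq, map_zero, dist_zero_left] at h1 h3
  rw [dist_eq_norm] at h2
  rw [← h1, ← h2, ← h3] at t1 t2 t3
  rw [repr_b x, map_add, map_smul, map_smul] at hx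
  have q1 : b1 x = 0 := by
    by_contra hs
    exact tri_aux hs hx t1 t2 t3
  have q2 : b2 x = 0 := by
    by_contra hs
    rw [add_comm] at hx
    rw [norm_sub_rev] at t1 t2 t3
    exact tri_aux hs hx (by linarith) (by linarith) (by linarith)
  rw [repr_b x, q1, q2]
  simp

/-- All we need about `dD`. -/
lemma exists_f {T : Triangulation S n} {l : Set S → ℝ} (hl : TriIneqT T l) (i : Fin n) :
    ∃ f : E2 →ₗ[ℝ] E2, Realizes f (lRes T l i) ∧ Function.Injective f ∧
      ∀ x y, dD (lRes T l i) x y = dist (f x) (f y) := by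
  have g1 := hl.1 i e01 (by simp [E0])
  have g2 := hl.1 i e12 (by simp [E0])
  have g3 := hl.1 i e02 (by simp [E0])
  have t1 := hl.2 i e01 e12 e02 rfl
  have t2 := hl.2 i e12 e02 e01 (by ext; simp [E0]; tauto)
  have t3 := hl.2 i e01 e02 e12 (by ext; simp [E0]; tauto)
  have h := exists_realizes (lRes T l i) g1 g2 g3 t1 t2 t3
  refine ⟨h.choose, h.choose_spec, realizes_inj _ _ h.choose_spec t1 t2 t3, ?_⟩
  intro x y
  rw [dD, dif_pos h]

lemma sep {f : E2 →ₗ[ℝ] E2} (hf : Function.Injective f) {C : Set E2} (hC : IsCompact C)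
    {x : E2} (hx : x ∉ C) : ∃ δ > 0, ∀ p ∈ C, δ ≤ dist (f x) (f p) := by
  have hfc : Continuous f := f.continuous_of_finiteDimensional
  have hcl : IsClosed (f '' C) := (hC.image hfc).isClosed
  have hn : f x ∉ f '' C := by
    rintro ⟨y, hy, h⟩
    exact hx (hf h ▸ hy)
  obtain ⟨δ, hδ, hb⟩ := Metric.isOpen_iff.1 hcl.isOpen_compl (f x) hn
  refine ⟨δ, hδ, fun p hp => ?_⟩
  by_contra hcon
  push Not at hcon
  exact hb (by rwa [Metric.mem_ball, dist_comm]) (mem_image_of_mem f hp)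

lemma sep' {f : E2 →ₗ[ℝ] E2} (hf : Function.Injective f) {C : Set E2} (hC : IsCompact C)
    {x : E2} : ∀ᶠ ε in nhdsWithin (0:ℝ) (Ioi 0), x ∉ C → ∀ p ∈ C, 2 * ε ≤ dist (f x) (f p) := by
  by_cases hx : x ∈ C
  · simp [hx]
  obtain ⟨δ, hδ, h⟩ := sep hf hC hx
  filter_upwards [Ioo_mem_nhdsGT (half_pos hδ)] with ε hε _ p hp
  have := h p hp
  linarith [hε.2]

lemma compact_E0 {e : Set E2} (he : e ∈ E0) : IsCompact e := by
  obtain ⟨a, b, rfl, -, -⟩ := seg_E0 he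
  rw [← convexHull_pair]
  exact Set.Finite.isCompact_convexHull ℝ (Set.toFinite _)

lemma eo_sub_D {e : Set E2} (he : e ∈ E0) : e ⊆ Dtri := by
  obtain ⟨a, b, _, h, -⟩ := seg_E0 he
  exact h

lemma fiber_finite (T : Triangulation S n) (k : Fin n) (s : S) :
    {x | x ∈ Dtri ∧ T.σ k x = s}.Finite := by
  have hsub : {x | x ∈ Dtri ∧ T.σ k x = s} ⊆
      V0 ∪ {x | x ∈ Do ∧ T.σ k x = s} ∪ ⋃ e ∈ E0, {x | x ∈ eo e ∧ T.σ k x = s} := by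
    rintro x ⟨hx, hs⟩
    rcases D_cases x hx with h | h | ⟨e, he, h⟩
    · exact Or.inl (Or.inl h)
    · exact Or.inl (Or.inr ⟨h, hs⟩)
    · refine Or.inr ?_
      simp only [mem_iUnion]
      exact ⟨e, he, h, hs⟩
  refine Set.Finite.subset ((V0_finite.union ?_).union (E0_finite.biUnion ?_)) hsub
  · apply Set.Subsingleton.finite
    rintro x ⟨hx, h⟩ y ⟨hy, h'⟩
    exact T.inj_int k hx hy (h.trans h'.symm)
  · intro e he
    apply Set.Subsingleton.finite
    rintro x ⟨hx, h⟩ y ⟨hy, h'⟩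
    exact T.inj_edge k e he hx hy (h.trans h'.symm)

lemma dist_seg (f : E2 →ₗ[ℝ] E2) (A : E2 →ᵃ[ℝ] E2) {a b x y : E2} (hx : x ∈ segment ℝ a b)
    (hy : y ∈ segment ℝ a b) : ∃ r : ℝ, 0 ≤ r ∧ r ≤ 1 ∧
      dist (f (A x)) (f (A y)) = r * dist (f (A a)) (f (A b)) ∧
      ∀ g : E2 →ₗ[ℝ] E2, dist (g x) (g y) = r * dist (g a) (g b) := by
  rw [segment_eq_image_lineMap] at hx hy
  obtain ⟨s, hs, rfl⟩ := hx
  obtain ⟨t, ht, rfl⟩ := hy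
  have key : ∀ B : E2 →ᵃ[ℝ] E2, dist (B (AffineMap.lineMap a b s)) (B (AffineMap.lineMap a b t))
      = |s - t| * dist (B a) (B b) := by
    intro B
    rw [AffineMap.apply_lineMap, AffineMap.apply_lineMap, dist_lineMap_lineMap, Real.dist_eq]
  refine ⟨|s - t|, abs_nonneg _, ?_, ?_, ?_⟩
  · rw [abs_le]; constructor <;> linarith [hs.1, hs.2, ht.1, ht.2]
  · exact key (f.toAffineMap.comp A)
  · intro g
    exact key g.toAffineMap

/-- Conditions on `ε` in the local lemma. -/
structure Good (T : Triangulation S n) (l : Set S → ℝ) (i : Fin n) (x : E2) (ε : ℝ) : Prop where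
  pos : 0 < ε
  vert : ∀ k, ∀ x' ∈ {x' | x' ∈ Dtri ∧ T.σ k x' = T.σ i x}, ∀ v ∈ V0, x' ≠ v →
    2 * ε ≤ dD (lRes T l k) x' v
  edge : ∀ k, ∀ x' ∈ {x' | x' ∈ Dtri ∧ T.σ k x' = T.σ i x}, ∀ e ∈ E0, x' ∉ e → ∀ p ∈ e,
    2 * ε ≤ dD (lRes T l k) x' p
  self : ∀ x' ∈ {x' | x' ∈ Dtri ∧ T.σ i x' = T.σ i x}, x' ≠ x → 2 * ε ≤ dD (lRes T l i) x' x

lemma exists_good {T : Triangulation S n} {l : Set S → ℝ} (hl : TriIneqT T l) (i : Fin n)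
    (x : E2) : ∃ ε, Good T l i x ε := by
  choose f hr hf hd using exists_f hl
  have h1 : ∀ᶠ ε in nhdsWithin (0:ℝ) (Ioi 0), ∀ k,
      ∀ x' ∈ {x' | x' ∈ Dtri ∧ T.σ k x' = T.σ i x}, ∀ v ∈ V0, x' ≠ v →
      2 * ε ≤ dD (lRes T l k) x' v := by
    rw [Filter.eventually_all]
    intro k
    rw [(fiber_finite T k _).eventually_all]
    intro x' _
    rw [V0_finite.eventually_all]
    intro v _
    filter_upwards [sep' (hf k) (isCompact_singleton (x := v)) (x := x')] with ε h hne
    rw [hd]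
    exact h hne v rfl
  have h2 : ∀ᶠ ε in nhdsWithin (0:ℝ) (Ioi 0), ∀ k,
      ∀ x' ∈ {x' | x' ∈ Dtri ∧ T.σ k x' = T.σ i x}, ∀ e ∈ E0, x' ∉ e → ∀ p ∈ e,
      2 * ε ≤ dD (lRes T l k) x' p := by
    rw [Filter.eventually_all]
    intro k
    rw [(fiber_finite T k _).eventually_all]
    intro x' _
    rw [E0_finite.eventually_all]
    intro e he
    filter_upwards [sep' (hf k) (compact_E0 he) (x := x')] with ε h hne p hp
    rw [hd]
    exact h hne p hp
  have h3 : ∀ᶠ ε in nhdsWithin (0:ℝ) (Ioi 0),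
      ∀ x' ∈ {x' | x' ∈ Dtri ∧ T.σ i x' = T.σ i x}, x' ≠ x →
      2 * ε ≤ dD (lRes T l i) x' x := by
    rw [(fiber_finite T i _).eventually_all]
    intro x' _
    filter_upwards [sep' (hf i) (isCompact_singleton (x := x)) (x := x')] with ε h hne
    rw [hd]
    exact h hne x rfl
  have h4 : ∀ᶠ ε in nhdsWithin (0:ℝ) (Ioi 0), 0 < ε := self_mem_nhdsWithin
  obtain ⟨ε, ⟨⟨q1, q2⟩, q3⟩, q4⟩ := (((h1.and h2).and h3).and h4).exists
  exact ⟨ε, q4, q1, q2, q3⟩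

lemma transfer {T : Triangulation S n} {l : Set S → ℝ} (hl : TriIneqT T l) {i : Fin n}
    {x : E2} {ε : ℝ} (hg : Good T l i x ε) {j k : Fin n} {p q x' : E2} (hp : p ∈ Dtri)
    (hq : q ∈ Dtri) (hpq : T.σ k q = T.σ j p) (hx' : x' ∈ Dtri) (hs : T.σ k x' = T.σ i x)
    (hlt : dD (lRes T l k) x' q < ε) :
    ∃ x'' ∈ Dtri, T.σ j x'' = T.σ i x ∧ dD (lRes T l j) x'' p ≤ dD (lRes T l k) x' q := by
  have hpos := hg.pos
  obtain ⟨fk, rk, -, dk⟩ := exists_f hl k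
  obtain ⟨fj, rj, -, dj⟩ := exists_f hl j
  rcases D_cases q hq with h | h | ⟨e, he, h⟩
  · have hxq : x' = q := by
      by_contra hne
      have := hg.vert k x' ⟨hx', hs⟩ q h hne
      linarith
    refine ⟨p, hp, ?_, ?_⟩
    · rw [← hpq, ← hxq, hs]
    · rw [dk, dj, dist_self]; exact dist_nonneg
  · have hm : T.σ j p ∈ T.σ k '' Do := ⟨q, h, hpq⟩
    rcases D_cases p hp with h' | h' | ⟨e', he', h'⟩
    · exact ((T.disj_vert_int k).le_bot
        ⟨mem_iUnion.2 ⟨j, mem_image_of_mem _ h'⟩, hm⟩).elim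
    · have hkj : k = j := by
        by_contra hne
        exact (T.disj_int k j hne).le_bot ⟨hm, mem_image_of_mem _ h'⟩
      subst hkj
      have hqp := T.inj_int k h h' hpq
      subst hqp
      exact ⟨x', hx', hs, le_rfl⟩
    · exact ((T.disj_int_edge k j e' he').le_bot ⟨hm, mem_image_of_mem _ h'⟩).elim
  · have hm : T.σ j p ∈ T.σ k '' eo e := ⟨q, h, hpq⟩
    rcases D_cases p hp with h' | h' | ⟨e', he', h'⟩
    · exact ((T.disj_vert_edge k e he).le_bot
        ⟨mem_iUnion.2 ⟨j, mem_image_of_mem _ h'⟩, hm⟩).elim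
    · exact ((T.disj_int_edge j k e he).le_bot ⟨mem_image_of_mem _ h', hm⟩).elim
    have heq : T.σ k '' eo e = T.σ j '' eo e' := by
      rcases T.edge_eq_or_disjoint k j e he e' he' with h0 | h0
      · exact h0
      · exact (h0.le_bot ⟨hm, mem_image_of_mem _ h'⟩).elim
    obtain ⟨A, hA, hAσ⟩ := T.glue k j e he e' he' heq
    have hAq' : A q ∈ e' := hA ▸ mem_image_of_mem A h.1
    have hAq : A q ∈ eo e' := by
      refine ⟨hAq', fun hv => ?_⟩
      refine (T.disj_vert_edge k e he).le_bot
        ⟨mem_iUnion.2 ⟨j, mem_image_of_mem _ hv⟩, ?_⟩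
      rw [hAσ q h.1]
      exact mem_image_of_mem _ h
    have hqp : A q = p := T.inj_edge j e' he' hAq h' ((hAσ q h.1).trans hpq)
    have hxe : x' ∈ e := by
      by_contra hne
      have := hg.edge k x' ⟨hx', hs⟩ e he hne q h.1
      linarith
    have hAx : A x' ∈ e' := hA ▸ mem_image_of_mem A hxe
    refine ⟨A x', eo_sub_D he' hAx, (hAσ x' hxe).trans hs, ?_⟩
    have himg : T.σ k '' e = T.σ j '' e' := by
      rw [← hA, image_image]
      exact image_congr fun y hy => (hAσ y hy).symm
    rw [dk, dj, ← hqp]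
    obtain ⟨a, b, hab, -, hlen⟩ := seg_E0 he
    obtain ⟨a', b', hab', -, hlen'⟩ := seg_E0 he'
    obtain ⟨r, hr0, -, hr, hr'⟩ := dist_seg fj A (hab ▸ hxe) (hab ▸ h.1)
    rw [hr, hr' fk]
    apply mul_le_mul_of_nonneg_left _ hr0
    rw [hlen fk _ rk]
    have ha : A a ∈ e' := hA ▸ mem_image_of_mem A (hab ▸ left_mem_segment ℝ a b)
    have hb : A b ∈ e' := hA ▸ mem_image_of_mem A (hab ▸ right_mem_segment ℝ a b)
    obtain ⟨r2, hr20, hr21, -, hr2⟩ := dist_seg fj A (hab' ▸ ha) (hab' ▸ hb)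
    rw [hr2 fj, hlen' fj _ rj]
    have : lRes T l j e' = lRes T l k e := by simp only [lRes, himg]
    rw [this]
    have hp := hl.1 k e he
    change 0 < lRes T l k e at hp
    nlinarith

/-- Cut-off distance to the point `σᵢ x`. -/
def U (T : Triangulation S n) (l : Set S → ℝ) (i : Fin n) (x : E2) (ε : ℝ) (s : S) : ℝ :=
  sInf (insert ε {r | ∃ k, ∃ x' ∈ Dtri, ∃ q ∈ Dtri, T.σ k x' = T.σ i x ∧ T.σ k q = s ∧
    r = dD (lRes T l k) x' q})

lemma dD_nonneg (l : Set E2 → ℝ) (x y : E2) : 0 ≤ dD l x y := by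
  unfold dD
  split_ifs
  · exact dist_nonneg
  · exact le_rfl

lemma U_bdd {T : Triangulation S n} {l : Set S → ℝ} {i : Fin n}
    {x : E2} {ε : ℝ} (hε : 0 < ε) (s : S) :
    BddBelow (insert ε {r | ∃ k, ∃ x' ∈ Dtri, ∃ q ∈ Dtri, T.σ k x' = T.σ i x ∧ T.σ k q = s ∧
    r = dD (lRes T l k) x' q}) := by
  refine ⟨0, ?_⟩
  rintro r (rfl | ⟨k, x', _, q, _, _, _, rfl⟩)
  · exact hε.le
  · exact dD_nonneg _ _ _

lemma U_step {T : Triangulation S n} {l : Set S → ℝ} (hl : TriIneqT T l) {i : Fin n}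
    {x : E2} {ε : ℝ} (hg : Good T l i x ε) (j : Fin n) {p q : E2} (hp : p ∈ Dtri)
    (hq : q ∈ Dtri) :
    U T l i x ε (T.σ j q) ≤ U T l i x ε (T.σ j p) + dD (lRes T l j) p q := by
  rw [← sub_le_iff_le_add]
  apply le_csInf (insert_nonempty _ _)
  have h0 := dD_nonneg (lRes T l j) p q
  have hle : U T l i x ε (T.σ j q) ≤ ε := csInf_le (U_bdd hg.pos _) (mem_insert _ _)
  rintro r (rfl | ⟨k, x', hx', q', hq', hs, hs', rfl⟩)
  · linarith
  by_cases hlt : dD (lRes T l k) x' q' < ε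
  · obtain ⟨x'', hx'', hs'', hle'⟩ := transfer hl hg hp hq' hs' hx' hs hlt
    have h1 : U T l i x ε (T.σ j q) ≤ dD (lRes T l j) x'' q :=
      csInf_le (U_bdd hg.pos _) (mem_insert_of_mem _ ⟨j, x'', hx'', q, hq, hs'', rfl, rfl⟩)
    obtain ⟨fj, -, -, dj⟩ := exists_f hl j
    rw [dj] at h1 hle' ⊢
    have := dist_triangle (fj x'') (fj p) (fj q)
    linarith
  · linarith

lemma U_dTri {T : Triangulation S n} {l : Set S → ℝ} (hl : TriIneqT T l) {i : Fin n}
    {x : E2} {ε : ℝ} (hg : Good T l i x ε) (j : Fin n) {s t : S} (hs : s ∈ T.σ j '' Dtri)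
    (ht : t ∈ T.σ j '' Dtri) :
    U T l i x ε t ≤ U T l i x ε s + dTri T l j s t := by
  rw [← sub_le_iff_le_add']
  obtain ⟨p, hp, rfl⟩ := hs
  obtain ⟨q, hq, rfl⟩ := ht
  refine le_csInf ⟨dD (lRes T l j) p q, p, hp, q, hq, rfl, rfl, rfl⟩ ?_
  rintro r ⟨p', hp', q', hq', h1, h2, rfl⟩
  have := U_step hl hg j hp' hq'
  rw [h1, h2] at this
  linarith

lemma dTri_nonneg (T : Triangulation S n) (l : Set S → ℝ) (i : Fin n) (s t : S) :
    0 ≤ dTri T l i s t := by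
  apply Real.sInf_nonneg
  rintro r ⟨_, _, _, _, _, _, rfl⟩
  exact dD_nonneg _ _ _

lemma chain_one (T : Triangulation S n) (l : Set S → ℝ) (i : Fin n) {x y : E2} (hx : x ∈ Dtri)
    (hy : y ∈ Dtri) :
    dTri T l i (T.σ i x) (T.σ i y) ∈ chainSums T l (T.σ i x) (T.σ i y) := by
  refine ⟨1, fun m => if m = 0 then T.σ i x else T.σ i y, fun _ => i, by simp, by simp, ?_, ?_⟩
  · intro m hm
    have : m = 0 := by omega
    subst this
    exact ⟨by simpa using mem_image_of_mem _ hx, by simpa using mem_image_of_mem _ hy⟩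
  · simp

lemma dGlue_le (T : Triangulation S n) (l : Set S → ℝ) (i : Fin n) {x y : E2} (hx : x ∈ Dtri)
    (hy : y ∈ Dtri) : dGlue T l (T.σ i x) (T.σ i y) ≤ dD (lRes T l i) x y := by
  have h1 : dGlue T l (T.σ i x) (T.σ i y) ≤ dTri T l i (T.σ i x) (T.σ i y) := by
    apply csInf_le _ (chain_one T l i hx hy)
    refine ⟨0, ?_⟩
    rintro r ⟨k, c, idx, -, -, -, rfl⟩
    exact Finset.sum_nonneg fun _ _ => dTri_nonneg _ _ _ _ _
  refine h1.trans (csInf_le ?_ ⟨x, hx, y, hy, rfl, rfl, rfl⟩)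
  refine ⟨0, ?_⟩
  rintro r ⟨_, _, _, _, _, _, rfl⟩
  exact dD_nonneg _ _ _

/-- Pointwise local isometry. -/
lemma local_le {T : Triangulation S n} {l : Set S → ℝ} (hl : TriIneqT T l) {i : Fin n}
    {x : E2} {ε : ℝ} (hg : Good T l i x ε) (hx : x ∈ Dtri) {y : E2} (hy : y ∈ Dtri)
    (hlt : dD (lRes T l i) x y < ε) :
    dD (lRes T l i) x y ≤ U T l i x ε (T.σ i y) := by
  obtain ⟨f, -, -, hd⟩ := exists_f hl i
  apply le_csInf (insert_nonempty _ _)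
  rintro r (rfl | ⟨k, x', hx', q', hq', hs, hs', rfl⟩)
  · exact hlt.le
  by_cases hlt' : dD (lRes T l k) x' q' < ε
  · obtain ⟨x'', hx'', hs'', hle'⟩ := transfer hl hg hy hq' hs' hx' hs hlt'
    by_cases hxx : x'' = x
    · subst hxx; exact hle'
    · have h1 := hg.self x'' ⟨hx'', hs''⟩ hxx
      rw [hd] at h1 hlt hle'
      have := dist_triangle (f x'') (f y) (f x)
      rw [dist_comm (f y)] at this
      linarith
  · linarith

lemma chain_ge {T : Triangulation S n} {l : Set S → ℝ} (hl : TriIneqT T l) {i : Fin n}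
    {x : E2} {ε : ℝ} (hg : Good T l i x ε) {s t : S} {r : ℝ} (hr : r ∈ chainSums T l s t) :
    U T l i x ε t ≤ U T l i x ε s + r := by
  obtain ⟨k, c, idx, rfl, rfl, hc, rfl⟩ := hr
  have : ∀ m ≤ k, U T l i x ε (c m) ≤ U T l i x ε (c 0) +
      ∑ j ∈ Finset.range m, dTri T l (idx j) (c j) (c (j + 1)) := by
    intro m
    induction m with
    | zero => intro _; simp
    | succ m ih =>
      intro hm
      have h1 := ih (by omega)
      have h2 := hc m (by omega)
      have h3 := U_dTri hl hg (idx m) h2.1 h2.2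
      rw [Finset.sum_range_succ]
      linarith
  exact this k le_rfl

lemma U_rev {T : Triangulation S n} {l : Set S → ℝ} {i : Fin n}
    {x : E2} {ε : ℝ} (hε : 0 < ε) (hx : x ∈ Dtri) (hl : TriIneqT T l) :
    U T l i x ε (T.σ i x) ≤ 0 := by
  obtain ⟨f, -, -, hd⟩ := exists_f hl i
  exact csInf_le (U_bdd hε _)
    (mem_insert_of_mem _ ⟨i, x, hx, x, hx, rfl, rfl, by rw [hd, dist_self]⟩)

lemma dTri_symm {T : Triangulation S n} {l : Set S → ℝ} (hl : TriIneqT T l) (i : Fin n) (s t : S) :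
    dTri T l i s t = dTri T l i t s := by
  obtain ⟨f, -, -, hd⟩ := exists_f hl i
  unfold dTri
  congr 1
  ext r
  constructor
  · rintro ⟨a, ha, b, hb, h1, h2, rfl⟩
    exact ⟨b, hb, a, ha, h2, h1, by rw [hd, hd, dist_comm]⟩
  · rintro ⟨a, ha, b, hb, h1, h2, rfl⟩
    exact ⟨b, hb, a, ha, h2, h1, by rw [hd, hd, dist_comm]⟩

/-- The negative of U is also a potential, by symmetry. -/
lemma chain_ge' {T : Triangulation S n} {l : Set S → ℝ} (hl : TriIneqT T l) {i : Fin n}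
    {x : E2} {ε : ℝ} (hg : Good T l i x ε) {s t : S} {r : ℝ} (hr : r ∈ chainSums T l s t) :
    U T l i x ε s ≤ U T l i x ε t + r := by
  obtain ⟨k, c, idx, rfl, rfl, hc, rfl⟩ := hr
  have : ∀ m ≤ k, U T l i x ε (c 0) ≤ U T l i x ε (c m) +
      ∑ j ∈ Finset.range m, dTri T l (idx j) (c j) (c (j + 1)) := by
    intro m
    induction m with
    | zero => intro _; simp
    | succ m ih =>
      intro hm
      have h1 := ih (by omega)
      have h2 := hc m (by omega)
      have h3 := U_dTri hl hg (idx m) h2.2 h2.1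
      rw [dTri_symm hl] at h3
      rw [Finset.sum_range_succ]
      linarith
  exact this k le_rfl

lemma local_iso {T : Triangulation S n} {l : Set S → ℝ} (hl : TriIneqT T l) (i : Fin n)
    {x : E2} (hx : x ∈ Dtri) : ∃ ε > 0, ∀ y ∈ Dtri, dD (lRes T l i) x y < ε →
      dD (lRes T l i) x y ≤ dGlue T l (T.σ i x) (T.σ i y) ∧
      dD (lRes T l i) x y ≤ dGlue T l (T.σ i y) (T.σ i x) := by
  obtain ⟨ε, hg⟩ := exists_good hl i x
  refine ⟨ε, hg.pos, fun y hy hlt => ?_⟩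
  have h1 := local_le hl hg hx hy hlt
  have h2 := U_rev (T := T) (l := l) (i := i) hg.pos hx hl
  constructor
  · apply le_csInf ⟨_, chain_one T l i hx hy⟩
    intro r hr
    have := chain_ge hl hg hr
    linarith
  · apply le_csInf ⟨_, chain_one T l i hy hx⟩
    intro r hr
    have := chain_ge' hl hg hr
    linarith

/-- `Part d s t c`: there is a partition of `[s,t]` with sum `c`. -/
inductive Part (d : ℝ → ℝ → ℝ) (s : ℝ) : ℝ → ℝ → Prop
  | refl : Part d s s 0
  | step {r t c : ℝ} : Part d s r c → r < t → Part d s t (c + d r t)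

lemma Part.trans {d : ℝ → ℝ → ℝ} {s r t c c' : ℝ} (h : Part d s r c) (h' : Part d r t c') :
    Part d s t (c + c') := by
  induction h' with
  | refl => simpa using h
  | step _ hlt ih => rw [← add_assoc]; exact Part.step ih hlt

lemma Part.single {d : ℝ → ℝ → ℝ} (hd : ∀ t, d t t = 0) {s t : ℝ} (h : s ≤ t) :
    Part d s t (d s t) := by
  rcases h.eq_or_lt with rfl | h
  · rw [hd]; exact Part.refl
  · simpa using Part.step Part.refl h

lemma Part.toFin {d : ℝ → ℝ → ℝ} {s t c : ℝ} (h : Part d s t c) :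
    ∃ (k : ℕ) (τ : Fin (k + 1) → ℝ), StrictMono τ ∧ τ 0 = s ∧ τ (Fin.last k) = t ∧
      ∑ j : Fin k, d (τ j.castSucc) (τ j.succ) = c := by
  induction h with
  | refl => exact ⟨0, fun _ => s, fun a b h => absurd h (by omega), rfl, rfl, by simp⟩
  | @step r t c _ hlt ih =>
    obtain ⟨k, τ, hm, h0, h1, hsum⟩ := ih
    refine ⟨k + 1, Fin.snoc (α := fun _ => ℝ) τ t, ?_, ?_, ?_, ?_⟩
    · rw [Fin.strictMono_iff_lt_succ]
      intro j
      rw [Fin.snoc_castSucc]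
      rcases Fin.eq_castSucc_or_eq_last j with ⟨j', rfl⟩ | rfl
      · rw [← Fin.castSucc_succ, Fin.snoc_castSucc]
        exact hm Fin.castSucc_lt_succ
      · rw [Fin.succ_last, Fin.snoc_last, h1]
        exact hlt
    · rw [← Fin.castSucc_zero, Fin.snoc_castSucc, h0]
    · rw [Fin.snoc_last]
    · rw [Fin.sum_univ_castSucc]
      congr 1
      · rw [← hsum]
        refine Finset.sum_congr rfl fun j _ => ?_
        rw [Fin.snoc_castSucc, ← Fin.castSucc_succ, Fin.snoc_castSucc]
      · rw [Fin.snoc_castSucc, Fin.succ_last, Fin.snoc_last, h1]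

/-- Cousin type argument. -/
lemma cousin {d D : ℝ → ℝ → ℝ} (hd : ∀ t, d t t = 0) (hD0 : ∀ t, D t t = 0)
    (hD : ∀ r s t, D r t ≤ D r s + D s t)
    (hloc : ∀ c ∈ Icc (0:ℝ) 1, ∃ δ > 0, ∀ t ∈ Icc (0:ℝ) 1, |t - c| < δ →
      D c t ≤ d c t ∧ D t c ≤ d t c)
    {s t : ℝ} (hs : 0 ≤ s) (hst : s ≤ t) (ht : t ≤ 1) : ∃ c, D s t ≤ c ∧ Part d s t c := by
  by_contra hcon
  let A : Set ℝ := {r | r ∈ Icc s t ∧ ∃ c, D s r ≤ c ∧ Part d s r c}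
  have hsA : s ∈ A := ⟨⟨le_rfl, hst⟩, 0, (hD0 s).le, Part.refl⟩
  have hbdd : BddAbove A := ⟨t, fun r hr => hr.1.2⟩
  have hne : A.Nonempty := ⟨s, hsA⟩
  obtain ⟨m, hm⟩ : ∃ m, m = sSup A := ⟨_, rfl⟩
  have hsm : s ≤ m := hm ▸ le_csSup hbdd hsA
  have hmt : m ≤ t := hm ▸ csSup_le hne fun r hr => hr.1.2
  obtain ⟨δ, hδ, hl⟩ := hloc m ⟨hs.trans hsm, hmt.trans ht⟩
  obtain ⟨r, hrA, hr⟩ := exists_lt_of_lt_csSup hne (show m - δ < sSup A by linarith)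
  have hrm : r ≤ m := hm ▸ le_csSup hbdd hrA
  obtain ⟨⟨hsr, hrt⟩, c, hc, hP⟩ := hrA
  have h1 := (hl r ⟨hs.trans hsr, hrt.trans ht⟩ (by rw [abs_lt]; constructor <;> linarith)).2
  have hmA : ∃ c, D s m ≤ c ∧ Part d s m c :=
    ⟨c + d r m, by have := hD s r m; linarith, hP.trans (Part.single hd hrm)⟩
  obtain ⟨c', hc', hP'⟩ := hmA
  rcases hmt.eq_or_lt with h | h
  · exact hcon (h ▸ ⟨c', hc', hP'⟩)
  obtain ⟨u, hu1, hu2⟩ := exists_between (lt_min h (show m < m + δ by linarith))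
  have hut := hu2.trans_le (min_le_left _ _)
  have huδ := hu2.trans_le (min_le_right _ _)
  have h2 := (hl u ⟨by linarith, by linarith⟩ (by rw [abs_lt]; constructor <;> linarith)).1
  have huA : u ∈ A := ⟨⟨by linarith, hut.le⟩, c' + d m u,
    by have := hD s m u; linarith, hP'.trans (Part.single hd hu1.le)⟩
  have : u ≤ m := hm ▸ le_csSup hbdd huA
  linarith

end GlueAux

/-- Theorem 4.1 (a): for every `i ∈ I` and every continuous curve
`γ : [0,1] → Dtri`, the length of `γ` in `(Dtri, d[l^{(i)}])` equals the length of
`σᵢ ∘ γ` in `(S, d[l])`. -/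
theorem pathLen_dGlue_eq
    {S : Type} [TopologicalSpace S] [CompactSpace S] [T2Space S] [ConnectedSpace S]
    {n : ℕ} (T : Triangulation S n) (l : Set S → ℝ) (hl : TriIneqT T l) (i : Fin n) :
    ∀ γ : ℝ → E2, ContinuousOn γ (Icc (0:ℝ) 1) → (∀ t ∈ Icc (0:ℝ) 1, γ t ∈ Dtri) →
      pathLen (dD (lRes T l i)) γ = pathLen (dGlue T l) (T.σ i ∘ γ) := by
  intro γ hγ hγD
  obtain ⟨f, -, -, hd⟩ := GlueAux.exists_f hl i
  have hmemIcc : ∀ {k : ℕ} {t : Fin (k + 1) → ℝ},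
      (StrictMono t ∧ t 0 = 0 ∧ t (Fin.last k) = 1) → ∀ j, t j ∈ Icc (0:ℝ) 1 := by
    intro k t ht j
    exact ⟨ht.2.1 ▸ ht.1.monotone (Fin.zero_le j), ht.2.2 ▸ ht.1.monotone (Fin.le_last j)⟩
  apply le_antisymm
  · refine iSup_le fun k => iSup_le fun t => iSup_le fun ht => ?_
    -- work with the clamped pseudo-distances
    let P : ℝ → ℝ := fun r => max 0 (min 1 r)
    have hP : ∀ r ∈ Icc (0:ℝ) 1, P r = r := by
      intro r hr
      simp only [P]
      rw [min_eq_right hr.2, max_eq_right hr.1]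
    have hPI : ∀ r, P r ∈ Icc (0:ℝ) 1 := fun r =>
      ⟨le_max_left _ _, max_le zero_le_one (min_le_left _ _)⟩
    let d : ℝ → ℝ → ℝ := fun r s => dGlue T l (T.σ i (γ (P r))) (T.σ i (γ (P s)))
    let D : ℝ → ℝ → ℝ := fun r s => dist (f (γ r)) (f (γ s))
    have hd0 : ∀ r, d r r = 0 := by
      intro r
      apply le_antisymm
      · have := GlueAux.dGlue_le T l i (hγD _ (hPI r)) (hγD _ (hPI r))
        rwa [hd, dist_self] at this
      · apply Real.sInf_nonneg
        rintro q ⟨k, c, idx, -, -, -, rfl⟩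
        exact Finset.sum_nonneg fun _ _ => GlueAux.dTri_nonneg _ _ _ _ _
    have hloc : ∀ c ∈ Icc (0:ℝ) 1, ∃ δ > 0, ∀ t ∈ Icc (0:ℝ) 1, |t - c| < δ →
        D c t ≤ d c t ∧ D t c ≤ d t c := by
      intro c hc
      obtain ⟨ε, hε, hloc⟩ := GlueAux.local_iso hl i (hγD c hc)
      have hcont : ContinuousOn (fun r => f (γ r)) (Icc (0:ℝ) 1) :=
        (f.continuous_of_finiteDimensional).comp_continuousOn hγ
      obtain ⟨δ, hδ, h⟩ := Metric.continuousOn_iff.1 hcont c hc ε hε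
      refine ⟨δ, hδ, fun r hr hrc => ?_⟩
      have h1 := h r hr (by rwa [Real.dist_eq])
      rw [dist_comm] at h1
      have h2 := hloc (γ r) (hγD r hr) (by rwa [hd])
      rw [hd] at h2
      simp only [D, d, hP r hr, hP c hc]
      exact ⟨h2.1, by rw [dist_comm]; exact h2.2⟩
    have hpart : ∀ m : Fin (k + 1), ∃ c, (∑ j : Fin k, if j.castSucc < m then
        D (t j.castSucc) (t j.succ) else 0) ≤ c ∧ GlueAux.Part d 0 (t m) c := by
      intro m
      induction m using Fin.induction with
      | zero =>
        refine ⟨0, ?_, ?_⟩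
        · simp
        · rw [ht.2.1]; exact GlueAux.Part.refl
      | succ m ih =>
        obtain ⟨c, hc, hp⟩ := ih
        obtain ⟨c', hc', hp'⟩ := GlueAux.cousin (d := d) (D := D) hd0 (fun _ => dist_self _)
          (fun _ _ _ => dist_triangle _ _ _) hloc (hmemIcc ht m.castSucc).1
          (ht.1.monotone Fin.castSucc_lt_succ.le) (hmemIcc ht m.succ).2
        refine ⟨c + c', ?_, hp.trans hp'⟩
        have : (∑ j : Fin k, if j.castSucc < m.succ then D (t j.castSucc) (t j.succ) else 0)
            = (∑ j : Fin k, if j.castSucc < m.castSucc then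
              D (t j.castSucc) (t j.succ) else 0) + D (t m.castSucc) (t m.succ) := by
          have e : D (t m.castSucc) (t m.succ) =
              ∑ j : Fin k, if j = m then D (t j.castSucc) (t j.succ) else 0 := by simp
          rw [e, ← Finset.sum_add_distrib]
          refine Finset.sum_congr rfl fun j _ => ?_
          rcases lt_trichotomy j m with h | h | h
          · have h' : j.castSucc < m.castSucc := h
            simp [Fin.castSucc_lt_succ_iff, h.le, h, h.ne]
          · subst h; simp [Fin.castSucc_lt_succ]
          · simp [Fin.castSucc_lt_succ_iff, not_le.2 h, not_lt.2 h.le, h.ne']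
        rw [this]
        linarith
    obtain ⟨c, hc, hp⟩ := hpart (Fin.last k)
    rw [ht.2.2] at hp
    obtain ⟨k', τ, hτ, h0, h1, hsum⟩ := hp.toFin
    have hτ' : StrictMono τ ∧ τ 0 = 0 ∧ τ (Fin.last k') = 1 := ⟨hτ, h0, h1⟩
    refine le_trans ?_ (le_iSup_of_le k' (le_iSup_of_le τ (le_iSup_of_le hτ' le_rfl)))
    apply ENNReal.ofReal_le_ofReal
    calc ∑ j : Fin k, dD (lRes T l i) (γ (t j.castSucc)) (γ (t j.succ))
        = ∑ j : Fin k, if j.castSucc < Fin.last k then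
          D (t j.castSucc) (t j.succ) else 0 := by
          refine Finset.sum_congr rfl fun j _ => ?_
          rw [if_pos (Fin.castSucc_lt_last j), hd]
      _ ≤ c := hc
      _ = ∑ j : Fin k', d (τ j.castSucc) (τ j.succ) := hsum.symm
      _ = _ := by
          refine Finset.sum_congr rfl fun j _ => ?_
          simp only [d, Function.comp, hP _ (hmemIcc hτ' _)]
  · refine iSup_mono fun k => iSup_mono fun t => iSup_mono fun ht => ?_
    apply ENNReal.ofReal_le_ofReal
    refine Finset.sum_le_sum fun j _ => ?_
    exact GlueAux.dGlue_le T l i (hγD _ (hmemIcc ht _)) (hγD _ (hmemIcc ht _))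
end
end
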